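/- Let B ⊂ A be a regular inclusion of simple unital C*-algebras with a finite-index conditional expectation, and let E₀ : A → B be the minimal conditional expectation. Then the Watatani index of the inclusion satisfies [A:B]₀ = |W(B ⊂ A)| · dim_ℂ(C_A(B)): for every right quasi-basis (λ_i) of E₀ one has Σ_i λ_i λ_i* = (|W(B ⊂ A)| · dim_ℂ C_A(B))·1. In particular [A:B]₀ is a positive integer and |W(B ⊂ A)| ≤ [A:B]₀; and if moreover the inclusion is irreducible (C_A(B) = ℂ·1), then [A:B]₀ = |N_A(B)/U(B)|. -/

import Mathlib

/-!
Write `C = C_A(B)`. Since `B` is simple its centre is `ℂ` (`center_scalar`), so every conditional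
expectation `F` onto `B` restricts to a functional on `C`, and `F (c g) = 0` for `c ∈ C` and a
normalizing unitary `g ∉ U(B)·U(C)` (`CE_normalizer`). If `F` has finite index, a
Pimsner-Popa type inequality (`orth_bound`) bounds the length of `F`-orthonormal families; hence the Weyl group is finite with
representatives `u_w` (`exists_weyl`), and `C` has a finite `F`-orthonormal basis `c_j`
(`exists_centBasis`). By regularity the elements `c_j u_w` are an orthonormal basis of `A` over `B`
(`expansion`), so the index of `F` is `∑_w u_w* (∑_j c_j* c_j) u_w` (`exists_QB`).

Let `d = dim C` and `n = |W|`. The formula `T x = d⁻¹ ∑ F (c_j x c_j*)` defines a conditional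
expectation whose restriction to `C` is the normalized trace of right multiplication on `C`; it is
therefore tracial and invariant under the normalizer (`exists_trace`). For a `T`-orthonormal
basis `t_k` of `C`, the element `∑ t_k* t_k` is basis independent, so it commutes with the
normalizer, is central in the simple algebra `A`, and equals `d` (`trace_index`). Thus `T` has
index `n d`, and the minimal index `r₀` satisfies `r₀ ≤ n d`.

Conversely, let `c_j` be orthonormal for `E₀`. Applying `T` to
`r₀ = ∑_w u_w* (∑_j c_j* c_j) u_w` gives `r₀ = n ∑_j T (c_j c_j*)`, and comparing the two
orthonormal bases `c` and `t` through the inequality `2 Re(ab) ≤ |a|² + |b|²` shows that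
`∑_j T (c_j c_j*) ≥ d` (`length_bound`). Hence `r₀ = n d` (`minimal_index`).
-/

namespace RegularInclusion

variable {A : Type*} [NormedRing A] [StarRing A] [CStarRing A] [CompleteSpace A]
  [NormedAlgebra ℂ A] [StarModule ℂ A]

/-- A conditional expectation of `A` onto the subset `B`: a `ℂ`-linear positive
`B`-bimodular projection of `A` onto `B`. -/
def IsCondExp (B : Set A) (E : A →ₗ[ℂ] A) : Prop :=
  (∀ x, E x ∈ B) ∧ (∀ b ∈ B, E b = b) ∧
  (∀ x, ∃ y, E (star x * x) = star y * y) ∧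
  (∀ b₁ ∈ B, ∀ b₂ ∈ B, ∀ x, E (b₁ * x * b₂) = b₁ * E x * b₂)

/-- `l` is a right quasi-basis for `E`, witnessing finite index. -/
def IsRightQB (E : A →ₗ[ℂ] A) {n : ℕ} (l : Fin n → A) : Prop :=
  ∀ x, x = ∑ i, E (x * l i) * star (l i)

/-- The centralizer (relative commutant) `C_A(B)` of `B` in `A`. -/
def cent (B : Set A) : Set A := {x | ∀ b ∈ B, x * b = b * x}

/-- The normalizer `N_A(B) = {u ∈ U(A) : uBu* = B}` of `B` in `A`. -/
def normalizer (B : Set A) : Set A :=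
  {u | u ∈ unitary A ∧ (fun x => u * x * star u) '' B = B}

/-- The set `U(B)` of unitaries of `B`. -/
def UB (B : Set A) : Set A := {b | b ∈ B ∧ b ∈ unitary A}

/-- The set `U(B)·U(C_A(B))` of products of a unitary of `B` and a unitary of
the centralizer of `B`. -/
def UBC (B : Set A) : Set A :=
  {x | ∃ b c, b ∈ B ∧ b ∈ unitary A ∧ c ∈ cent B ∧ c ∈ unitary A ∧ x = b * c}

/-- Simplicity of the C*-algebra (given as the subset `S` of `A`): the only closed
two-sided ideals of `S` are `{0}` and `S`. -/
def IsSimpleCStar (S : Set A) : Prop :=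
  ∀ I : Set A, I ⊆ S → IsClosed I → (0 : A) ∈ I →
    (∀ x ∈ I, ∀ y ∈ I, x + y ∈ I) →
    (∀ x ∈ I, ∀ b ∈ S, x * b ∈ I ∧ b * x ∈ I) →
    I = {0} ∨ I = S

/-- The intermediate C*-subalgebra `C := C*(B ∪ C_A(B))` generated by `B` and the
centralizer of `B`. -/
def genC (B : Set A) : StarSubalgebra ℂ A :=
  (StarAlgebra.adjoin ℂ (B ∪ cent B)).topologicalClosure

/-- Regularity of the inclusion `B ⊆ A`: the normalizer of `B` generates `A` as a
C*-algebra. -/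
def IsRegular (B : Set A) : Prop :=
  (StarAlgebra.adjoin ℂ (normalizer B)).topologicalClosure = ⊤

/-- `E₀` is the minimal conditional expectation of `A` onto `B`: the finite-index
conditional expectation whose (scalar) Watatani index is least among all finite-index
conditional expectations onto `B`. -/
def IsMinimalCondExp (B : Set A) (E₀ : A →ₗ[ℂ] A) : Prop :=
  IsCondExp B E₀ ∧
  ∃ (r₀ : ℝ) (n : ℕ) (l : Fin n → A), IsRightQB E₀ l ∧
    (∑ i, l i * star (l i)) = (r₀ : ℂ) • 1 ∧
    ∀ E : A →ₗ[ℂ] A, IsCondExp B E → ∀ (m : ℕ) (μ : Fin m → A), IsRightQB E μ →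
      ∀ r : ℝ, (∑ i, μ i * star (μ i)) = (r : ℂ) • 1 → r₀ ≤ r

/-- The centralizer of `B` in `A`, as a `ℂ`-submodule of `A`. -/
def centSubmodule (B : Set A) : Submodule ℂ A where
  carrier := cent B
  zero_mem' := by intro b _; simp
  add_mem' := by
    intro x y hx hy b hb
    rw [add_mul, mul_add, hx b hb, hy b hb]
  smul_mem' := by
    intro c x hx b hb
    rw [smul_mul_assoc, mul_smul_comm, hx b hb]

/-! ### Centralizers and normalizers -/

set_option linter.unusedSectionVars false

section Algebra

variable {B : StarSubalgebra ℂ A}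

theorem cent_one : (1 : A) ∈ cent (B : Set A) := fun b _ => by simp

theorem cent_mul {x y : A} (hx : x ∈ cent (B : Set A)) (hy : y ∈ cent (B : Set A)) :
    x * y ∈ cent (B : Set A) := fun b hb => by
  rw [mul_assoc, hy b hb, ← mul_assoc, hx b hb, mul_assoc]

theorem cent_star {x : A} (hx : x ∈ cent (B : Set A)) : star x ∈ cent (B : Set A) :=
  fun b hb => by
    have h := congrArg star (hx (star b) (star_mem hb))
    simpa using h.symm

theorem cent_add {x y : A} (hx : x ∈ cent (B : Set A)) (hy : y ∈ cent (B : Set A)) :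
    x + y ∈ cent (B : Set A) := (centSubmodule (B : Set A)).add_mem hx hy

theorem cent_sub {x y : A} (hx : x ∈ cent (B : Set A)) (hy : y ∈ cent (B : Set A)) :
    x - y ∈ cent (B : Set A) := (centSubmodule (B : Set A)).sub_mem hx hy

theorem cent_smul (c : ℂ) {x : A} (hx : x ∈ cent (B : Set A)) :
    c • x ∈ cent (B : Set A) := (centSubmodule (B : Set A)).smul_mem c hx

theorem cent_sum {ι : Type*} (s : Finset ι) {f : ι → A} (hf : ∀ i, f i ∈ cent (B : Set A)) :
    ∑ i ∈ s, f i ∈ cent (B : Set A) :=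
  (centSubmodule (B : Set A)).sum_mem (fun i _ => hf i)

theorem smul_one_mem (c : ℂ) : c • (1 : A) ∈ B := B.smul_mem (one_mem B) c

/-- Membership in the normalizer without images of sets. -/
theorem normalizer_iff {g : A} : g ∈ normalizer (B : Set A) ↔
    (star g * g = 1 ∧ g * star g = 1) ∧
      (∀ b ∈ B, g * b * star g ∈ B) ∧ (∀ b ∈ B, star g * b * g ∈ B) := by
  unfold normalizer
  rw [Set.mem_ofPred_eq, Unitary.mem_iff]
  refine and_congr_right fun hg => ⟨fun h => ⟨fun b hb => ?_, fun b hb => ?_⟩, fun h => ?_⟩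
  · have : g * b * star g ∈ (fun x => g * x * star g) '' (B : Set A) := ⟨b, hb, rfl⟩
    rw [h] at this
    exact this
  · have hb' : b ∈ (fun x => g * x * star g) '' (B : Set A) := by rw [h]; exact hb
    obtain ⟨x, hx, rfl⟩ := hb'
    have : star g * (g * x * star g) * g = x := by
      calc star g * (g * x * star g) * g = (star g * g) * x * (star g * g) := by
            simp only [mul_assoc]
        _ = x := by simp [hg.1]
    change star g * (g * x * star g) * g ∈ B
    rw [this]
    exact hx
  · ext x
    constructor
    · rintro ⟨b, hb, rfl⟩
      exact h.1 b hb
    · intro hx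
      refine ⟨star g * x * g, h.2 x hx, ?_⟩
      calc g * (star g * x * g) * star g = (g * star g) * x * (g * star g) := by
            simp only [mul_assoc]
        _ = x := by simp [hg.2]

theorem normalizer_one : (1 : A) ∈ normalizer (B : Set A) := by
  rw [normalizer_iff]; simp

theorem normalizer_star {g : A} (hg : g ∈ normalizer (B : Set A)) :
    star g ∈ normalizer (B : Set A) := by
  rw [normalizer_iff] at hg ⊢
  simp only [star_star]
  exact ⟨⟨hg.1.2, hg.1.1⟩, hg.2.2, hg.2.1⟩

theorem normalizer_mul {g h : A} (hg : g ∈ normalizer (B : Set A))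
    (hh : h ∈ normalizer (B : Set A)) : g * h ∈ normalizer (B : Set A) := by
  have hu := mul_mem hg.1 hh.1
  rw [Unitary.mem_iff] at hu
  rw [normalizer_iff] at hg hh ⊢
  refine ⟨hu, fun b hb => ?_, fun b hb => ?_⟩
  · have := hg.2.1 _ (hh.2.1 b hb)
    simpa only [star_mul, mul_assoc] using this
  · have := hh.2.2 _ (hg.2.2 b hb)
    simpa only [star_mul, mul_assoc] using this

/-- Normalizing unitaries also normalize the centralizer. -/
theorem cent_conj {g c : A} (hg : g ∈ normalizer (B : Set A)) (hc : c ∈ cent (B : Set A)) :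
    g * c * star g ∈ cent (B : Set A) := fun b hb => by
  rw [normalizer_iff] at hg
  have h := hc _ (hg.2.2 b hb)
  calc g * c * star g * b = g * (c * (star g * b * g)) * star g := by
        simp only [mul_assoc, hg.1.2, mul_one]
    _ = (g * star g) * b * (g * c * star g) := by rw [h]; simp only [mul_assoc]
    _ = b * (g * c * star g) := by rw [hg.1.2, one_mul]

theorem cent_conj' {g c : A} (hg : g ∈ normalizer (B : Set A)) (hc : c ∈ cent (B : Set A)) :
    star g * c * g ∈ cent (B : Set A) := by
  simpa using cent_conj (normalizer_star hg) hc

theorem UBC_star {x : A} (hx : x ∈ UBC (B : Set A)) : star x ∈ UBC (B : Set A) := by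
  obtain ⟨b, c, hb, hbu, hc, hcu, rfl⟩ := hx
  refine ⟨star b, star c, star_mem hb, Unitary.star_mem hbu, cent_star hc, Unitary.star_mem hcu, ?_⟩
  rw [star_mul]
  exact cent_star hc _ (star_mem hb)

/-- `U(B)·U(C_A(B))` is invariant under conjugation by the normalizer. -/
theorem UBC_conj {g x : A} (hg : g ∈ normalizer (B : Set A)) (hx : x ∈ UBC (B : Set A)) :
    g * x * star g ∈ UBC (B : Set A) := by
  obtain ⟨b, c, hb, hbu, hc, hcu, rfl⟩ := hx
  refine ⟨g * b * star g, g * c * star g, (normalizer_iff.1 hg).2.1 b hb,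
    mul_mem (mul_mem hg.1 hbu) (Unitary.star_mem hg.1), cent_conj hg hc,
    mul_mem (mul_mem hg.1 hcu) (Unitary.star_mem hg.1), ?_⟩
  calc g * (b * c) * star g = g * b * 1 * c * star g := by simp only [mul_assoc, one_mul]
    _ = _ := by rw [← (normalizer_iff.1 hg).1.1]; simp only [mul_assoc]

theorem UBC_swap {g h : A} (hg : g ∈ normalizer (B : Set A))
    (hx : g * star h ∈ UBC (B : Set A)) : star g * h ∈ UBC (B : Set A) := by
  have h1 := UBC_star (UBC_conj (normalizer_star hg) hx)
  have h2 : star (star g * (g * star h) * star (star g)) = star g * h := by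
    rw [star_star, ← mul_assoc (star g), (normalizer_iff.1 hg).1.1, one_mul, star_mul, star_star]
  rwa [h2] at h1

/-- The normalizer being a group, the *-algebra it generates is its linear span; under
regularity a closed subspace containing the normalizer is therefore everything. -/
theorem regular_induction (hreg : IsRegular (B : Set A)) (S : Submodule ℂ A)
    (hS : IsClosed (S : Set A)) (hN : ∀ g ∈ normalizer (B : Set A), g ∈ S) (x : A) : x ∈ S := by
  have hspan : ∀ y ∈ StarAlgebra.adjoin ℂ (normalizer (B : Set A)),
      y ∈ Submodule.span ℂ (normalizer (B : Set A)) := by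
    intro y hy
    induction hy using StarAlgebra.adjoin_induction with
    | mem x h => exact Submodule.subset_span h
    | algebraMap r =>
      rw [Algebra.algebraMap_eq_smul_one]
      exact Submodule.smul_mem _ _ (Submodule.subset_span normalizer_one)
    | add x y _ _ hx hy => exact add_mem hx hy
    | mul x y _ _ hx hy =>
      have h := Submodule.mul_mem_mul hx hy
      rw [Submodule.span_mul_span] at h
      refine Submodule.span_mono ?_ h
      rintro _ ⟨a, ha, b, hb, rfl⟩
      exact normalizer_mul ha hb
    | star x hx' hx =>
      clear hx'
      induction hx using Submodule.span_induction with
      | mem x h => exact Submodule.subset_span (normalizer_star h)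
      | zero => simp
      | add x y _ _ hx hy => rw [star_add]; exact add_mem hx hy
      | smul a x _ hx => rw [star_smul]; exact Submodule.smul_mem _ _ hx
  have hx : x ∈ (StarAlgebra.adjoin ℂ (normalizer (B : Set A))).topologicalClosure := by
    rw [show (StarAlgebra.adjoin ℂ (normalizer (B : Set A))).topologicalClosure = ⊤ from hreg]
    trivial
  rw [← SetLike.mem_coe, StarSubalgebra.topologicalClosure_coe] at hx
  refine closure_minimal (fun y hy => ?_) hS hx
  exact Submodule.span_le.2 hN (hspan y hy)

/-- The centre of a simple unital C*-algebra consists of scalars: if `z` is central and `c` is in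
its spectrum, then the closed ideal generated by `z - c` is proper, hence zero. -/
theorem center_scalar [Nontrivial A] (S : StarSubalgebra ℂ A)
    (hS : IsClosed (S : Set A)) (hsimple : IsSimpleCStar (S : Set A)) {z : A} (hz : z ∈ S)
    (hcomm : ∀ b ∈ S, z * b = b * z) : ∃ c : ℂ, z = c • (1 : A) := by
  obtain ⟨c, hc⟩ := spectrum.nonempty z
  refine ⟨c, ?_⟩
  set y : A := z - c • 1 with hy
  have hyS : y ∈ S := sub_mem hz (smul_one_mem c)
  have hyc : ∀ b ∈ S, y * b = b * y := fun b hb => by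
    rw [hy, sub_mul, mul_sub, hcomm b hb]; simp
  have hynu : ¬ IsUnit y := by
    intro h
    rw [spectrum.mem_iff] at hc
    apply hc
    rw [Algebra.algebraMap_eq_smul_one, ← neg_sub, IsUnit.neg_iff]
    exact h
  have key := hsimple (closure ((fun b => y * b) '' (S : Set A)))
    (closure_minimal (by rintro _ ⟨b, hb, rfl⟩; exact mul_mem hyS hb) hS) isClosed_closure
    (subset_closure ⟨0, zero_mem S, by simp⟩)
    (by
      intro a ha b hb
      refine map_mem_closure₂ continuous_add ha hb ?_
      rintro _ ⟨a, ha, rfl⟩ _ ⟨b, hb, rfl⟩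
      exact ⟨a + b, add_mem ha hb, mul_add _ _ _⟩)
    (by
      intro a ha b hb
      constructor
      · refine map_mem_closure (f := fun x => x * b) (continuous_mul_const b) ha ?_
        rintro _ ⟨a, ha, rfl⟩
        exact ⟨a * b, mul_mem ha hb, (mul_assoc _ _ _).symm⟩
      · refine map_mem_closure (f := fun x => b * x) (continuous_const_mul b) ha ?_
        rintro _ ⟨a, ha, rfl⟩
        refine ⟨b * a, mul_mem hb ha, ?_⟩
        change y * (b * a) = b * (y * a)
        rw [← mul_assoc, hyc b hb, mul_assoc])
  rcases key with h | h
  · have : y * 1 ∈ closure ((fun b => y * b) '' (S : Set A)) :=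
      subset_closure ⟨1, one_mem S, rfl⟩
    rw [h, mul_one] at this
    exact sub_eq_zero.1 this
  · exfalso
    have h1 : (1 : A) ∈ closure ((fun b => y * b) '' (S : Set A)) := by rw [h]; exact one_mem S
    obtain ⟨_, ⟨b, hb, rfl⟩, hlt⟩ := Metric.mem_closure_iff.1 h1 1 one_pos
    rw [dist_eq_norm] at hlt
    have hu : IsUnit (y * b) := by
      have := isUnit_one_sub_of_norm_lt_one hlt
      simpa using this
    have hcm : Commute y b := hyc b hb
    exact hynu (hcm.isUnit_mul_iff.1 hu).1

end Algebra

/-! ### Conditional expectations -/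

section Expectation

variable [PartialOrder A] [StarOrderedRing A] {B : StarSubalgebra ℂ A} {F : A →ₗ[ℂ] A}

theorem nonneg_of_smul_one [Nontrivial A] {c : ℂ} (h : 0 ≤ c • (1 : A)) :
    ∃ r : ℝ, 0 ≤ r ∧ c = r := by
  let _ : CStarAlgebra A := {}
  have h1 : star (c • (1 : A)) = c • 1 := (IsSelfAdjoint.of_nonneg h).star_eq
  rw [star_smul, star_one] at h1
  have h2 : star c = c := smul_left_injective ℂ (one_ne_zero (α := A)) h1
  obtain ⟨r, rfl⟩ := Complex.conj_eq_iff_real.1 h2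
  refine ⟨r, ?_, rfl⟩
  have h3 : (r : ℂ) • (1 : A) = algebraMap ℝ A r := by
    rw [Algebra.algebraMap_eq_smul_one, Complex.coe_smul]
  rw [h3] at h
  refine spectrum_nonneg_of_nonneg (𝕜 := ℝ) h ?_
  rw [spectrum.scalar_eq]
  simp

theorem smul_one_le [Nontrivial A] {r s : ℝ} (h : (r : ℂ) • (1 : A) ≤ (s : ℂ) • 1) : r ≤ s := by
  rw [← sub_nonneg, ← sub_smul] at h
  obtain ⟨t, ht, h2⟩ := nonneg_of_smul_one h
  have : s - r = t := by exact_mod_cast h2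
  linarith

theorem le_norm_smul_one {a : A} (h : 0 ≤ a) : a ≤ ((‖a‖ : ℝ) : ℂ) • (1 : A) := by
  let _ : CStarAlgebra A := {}
  have h3 : ((‖a‖ : ℝ) : ℂ) • (1 : A) = algebraMap ℝ A ‖a‖ := by
    rw [Algebra.algebraMap_eq_smul_one, Complex.coe_smul]
  rw [h3]
  exact (IsSelfAdjoint.of_nonneg h).le_algebraMap_norm_self

theorem exists_star_mul_self {a : A} (h : 0 ≤ a) : ∃ y, a = star y * y := by
  let _ : CStarAlgebra A := {}
  exact CStarAlgebra.nonneg_iff_eq_star_mul_self.1 h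

theorem real_smul_nonneg {r : ℝ} (hr : 0 ≤ r) {a : A} (h : 0 ≤ a) : 0 ≤ (r : ℂ) • a := by
  let _ : CStarAlgebra A := {}
  rw [Complex.coe_smul]
  exact smul_nonneg hr h

theorem CE_left (hF : IsCondExp (B : Set A) F) {b : A} (hb : b ∈ B) (x : A) :
    F (b * x) = b * F x := by
  simpa using hF.2.2.2 b hb 1 (one_mem B) x

theorem CE_right (hF : IsCondExp (B : Set A) F) {b : A} (hb : b ∈ B) (x : A) :
    F (x * b) = F x * b := by
  simpa using hF.2.2.2 1 (one_mem B) b hb x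

theorem CE_one (hF : IsCondExp (B : Set A) F) : F 1 = 1 := hF.2.1 1 (one_mem B)

theorem CE_nonneg (hF : IsCondExp (B : Set A) F) {x : A} (hx : 0 ≤ x) : 0 ≤ F x := by
  obtain ⟨y, rfl⟩ := exists_star_mul_self hx
  obtain ⟨z, hz⟩ := hF.2.2.1 y
  rw [hz]
  exact star_mul_self_nonneg z

theorem CE_mono (hF : IsCondExp (B : Set A) F) {x y : A} (hx : x ≤ y) : F x ≤ F y := by
  rw [← sub_nonneg, ← map_sub]
  exact CE_nonneg hF (sub_nonneg.2 hx)

theorem CE_continuous (hF : IsCondExp (B : Set A) F) : Continuous F := by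
  let _ : CStarAlgebra A := {}
  exact map_continuous (PositiveLinearMap.mk₀ F fun x hx => CE_nonneg hF hx)

/-- A conditional expectation is *-preserving, by polarization from its positivity. -/
theorem CE_star (hF : IsCondExp (B : Set A) F) (x : A) : F (star x) = star (F x) := by
  have hsa : ∀ y : A, star (F (star y * y)) = F (star y * y) := fun y =>
    (IsSelfAdjoint.of_nonneg (CE_nonneg hF (star_mul_self_nonneg y))).star_eq
  have hpol : ∀ y : A, star (F (star y + y)) = F (star y + y) := fun y => by
    have h1 := hsa (y + 1)
    have h2 : star (y + 1) * (y + 1) = star y * y + (star y + y) + 1 := by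
      rw [star_add, star_one]; noncomm_ring
    rw [h2, map_add, map_add, CE_one hF, star_add, star_add, star_one, hsa y] at h1
    exact add_left_cancel (add_right_cancel h1)
  have h1 := hpol x
  have h2 := hpol (Complex.I • x)
  simp only [star_smul, map_add, map_smul, star_add, Complex.star_def, Complex.conj_I, neg_smul,
    map_neg, star_neg, neg_neg] at h1 h2
  have h3 : star (F (star x)) - star (F x) = - F (star x) + F x := by
    have := congrArg (fun z => (-Complex.I) • z) h2
    simpa [smul_smul, sub_eq_add_neg] using this
  have h4 : (2 : ℂ) • F (star x) = (2 : ℂ) • star (F x) := by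
    rw [two_smul, two_smul]
    have h5 : star (F (star x)) = F (star x) + F x - star (F x) := by rw [← h1]; abel
    rw [h5] at h3
    have h6 : F (star x) + F (star x) - (star (F x) + star (F x)) =
      (F (star x) + F x - star (F x) - star (F x)) - (- F (star x) + F x) := by abel
    rw [← sub_eq_zero, h6, h3, sub_self]
  exact smul_right_injective A (two_ne_zero (α := ℂ)) h4

theorem CE_cent (hF : IsCondExp (B : Set A) F) {x : A} (hx : x ∈ cent (B : Set A)) :
    F x ∈ cent (B : Set A) := fun b hb => by
  rw [← CE_right hF hb, ← CE_left hF hb, hx b hb]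

/-- On the centralizer of a simple algebra `B`, a conditional expectation onto `B` is given by a
linear functional. -/
theorem exists_functional [Nontrivial A] (hBclosed : IsClosed (B : Set A))
    (hBsimple : IsSimpleCStar (B : Set A)) (hF : IsCondExp (B : Set A) F) :
    ∃ φ : A →ₗ[ℂ] ℂ, ∀ x ∈ cent (B : Set A), F x = φ x • (1 : A) := by
  obtain ⟨ω, hω⟩ := SeparatingDual.exists_eq_one (R := ℂ) (one_ne_zero (α := A))
  refine ⟨(ω : A →ₗ[ℂ] ℂ) ∘ₗ F, fun x hx => ?_⟩
  obtain ⟨c, hc⟩ := center_scalar B hBclosed hBsimple (hF.1 x) (CE_cent hF hx)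
  simp [hc, hω]

/-- A conditional expectation kills `C_A(B)·g` unless the normalizing unitary `g` is trivial in
the Weyl group: `y = F (c * g)` intertwines the identity with `Ad g`, so `y` is a
multiple of a unitary of `B` which implements `Ad g` on `B`. -/
theorem CE_normalizer [Nontrivial A] (hBclosed : IsClosed (B : Set A))
    (hBsimple : IsSimpleCStar (B : Set A)) (hF : IsCondExp (B : Set A) F) {g c : A}
    (hg : g ∈ normalizer (B : Set A)) (hc : c ∈ cent (B : Set A))
    (hgU : g ∉ UBC (B : Set A)) : F (c * g) = 0 := by
  by_contra hne
  apply hgU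
  have hgu := hg.1
  rw [normalizer_iff] at hg
  obtain ⟨⟨hg1, hg2⟩, hg3, hg4⟩ := hg
  set y := F (c * g) with hy
  have hyB : y ∈ B := hF.1 _
  have h1 : ∀ b ∈ B, y * b = g * b * star g * y := fun b hb => by
    rw [hy, ← CE_right hF hb, ← CE_left hF (hg3 b hb)]
    congr 1
    calc c * g * b = c * (g * b * star g) * g := by simp only [mul_assoc, hg1, mul_one]
      _ = g * b * star g * (c * g) := by rw [hc _ (hg3 b hb)]; simp only [mul_assoc]
  have h2 : ∀ b ∈ B, star y * (g * b * star g) = b * star y := fun b hb => by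
    have := congrArg star (h1 (star b) (star_mem hb))
    simpa [mul_assoc] using this.symm
  obtain ⟨s, hs⟩ := center_scalar B hBclosed hBsimple (z := star y * y)
    (mul_mem (star_mem hyB) hyB) (fun b hb => by
      rw [mul_assoc, h1 b hb, ← mul_assoc, h2 b hb, mul_assoc])
  obtain ⟨s', hs'⟩ := center_scalar B hBclosed hBsimple (z := y * star y)
    (mul_mem hyB (star_mem hyB)) (fun b hb => by
      have h3 : b = g * (star g * b * g) * star g := by
        calc b = (g * star g) * b * (g * star g) := by rw [hg2]; simp
          _ = _ := by simp only [mul_assoc]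
      have h4 := h1 _ (hg4 b hb)
      have h5 := h2 _ (hg4 b hb)
      rw [← h3] at h4 h5
      rw [mul_assoc, h5, ← mul_assoc, h4, mul_assoc])
  have hss : s = s' := by
    have h3 : y * (star y * y) = (y * star y) * y := (mul_assoc _ _ _).symm
    rw [hs, hs', mul_smul_comm, mul_one, smul_mul_assoc, one_mul] at h3
    exact smul_left_injective ℂ hne h3
  obtain ⟨r, hr, rfl⟩ := nonneg_of_smul_one (hs ▸ star_mul_self_nonneg y)
  have hr0 : r ≠ 0 := by
    rintro rfl
    rw [Complex.ofReal_zero, zero_smul] at hs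
    exact hne (CStarRing.star_mul_self_eq_zero_iff y |>.1 hs)
  have hrpos : 0 < r := lt_of_le_of_ne hr (Ne.symm hr0)
  set t : ℂ := (((Real.sqrt r)⁻¹ : ℝ) : ℂ) with ht
  have htt : t * t * (r : ℂ) = 1 := by
    rw [ht, ← Complex.ofReal_mul, ← Complex.ofReal_mul, ← mul_inv, Real.mul_self_sqrt hr,
      inv_mul_cancel₀ hr0, Complex.ofReal_one]
  have hst : star t = t := by rw [ht]; exact Complex.conj_ofReal _
  have hw1 : star (t • y) * (t • y) = 1 := by
    rw [star_smul, smul_mul_smul_comm, hs, hst, smul_smul, htt, one_smul]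
  have hw2 : (t • y) * star (t • y) = 1 := by
    rw [star_smul, smul_mul_smul_comm, hs', ← hss, hst, smul_smul, htt, one_smul]
  have hwu : t • y ∈ unitary A := Unitary.mem_iff.2 ⟨hw1, hw2⟩
  refine ⟨t • y, star (t • y) * g, B.smul_mem hyB t, hwu, fun b hb => ?_,
    mul_mem (Unitary.star_mem hwu) hgu, ?_⟩
  · rw [star_smul, smul_mul_assoc, smul_mul_assoc, mul_smul_comm]
    congr 1
    rw [← mul_assoc b, ← h2 b hb]
    simp only [mul_assoc, hg1, mul_one]
  · rw [← mul_assoc, hw2, one_mul]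

end Expectation

/-! ### Orthonormal families -/

section Orthonormal

variable [PartialOrder A] [StarOrderedRing A] {B : StarSubalgebra ℂ A} {F : A →ₗ[ℂ] A}

/-- Orthonormality of a finite family for the `B`-valued inner product `F (x * star y)`. -/
def Orth (F : A →ₗ[ℂ] A) {ι : Type*} [DecidableEq ι] (x : ι → A) : Prop :=
  ∀ i j, F (x i * star (x j)) = if i = j then 1 else 0

/-- The Bessel inequality for the `B`-valued inner product. -/
theorem bessel (hF : IsCondExp (B : Set A) F) {n : ℕ} {x : Fin n → A} (hx : Orth F x) (l : A) :
    ∑ j, star (F (x j * l)) * F (x j * l) ≤ F (star l * l) := by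
  have hs : ∀ j, F (star l * star (x j)) = star (F (x j * l)) := fun j => by
    rw [← CE_star hF, star_mul]
  have h := CE_nonneg hF (mul_star_self_nonneg (star l - ∑ j, star (F (x j * l)) * x j))
  have h1 : F (star l * star (∑ j, star (F (x j * l)) * x j)) =
      ∑ j, star (F (x j * l)) * F (x j * l) := by
    rw [star_sum, Finset.mul_sum, map_sum]
    refine Finset.sum_congr rfl fun j _ => ?_
    rw [star_mul, star_star, ← mul_assoc, CE_right hF (hF.1 _), hs]
  have h2 : F ((∑ j, star (F (x j * l)) * x j) * l) =
      ∑ j, star (F (x j * l)) * F (x j * l) := by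
    rw [Finset.sum_mul, map_sum]
    refine Finset.sum_congr rfl fun j _ => ?_
    rw [mul_assoc, CE_left hF (star_mem (hF.1 _))]
  have h3 : F ((∑ j, star (F (x j * l)) * x j) * star (∑ j, star (F (x j * l)) * x j)) =
      ∑ j, star (F (x j * l)) * F (x j * l) := by
    rw [star_sum, Finset.sum_mul_sum, map_sum]
    refine Finset.sum_congr rfl fun j _ => ?_
    rw [map_sum, Finset.sum_eq_single j]
    · rw [star_mul, star_star, mul_assoc, CE_left hF (star_mem (hF.1 _)), ← mul_assoc,
        CE_right hF (hF.1 _), hx j j, if_pos rfl, one_mul]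
    · intro k _ hk
      rw [star_mul, star_star, mul_assoc, CE_left hF (star_mem (hF.1 _)), ← mul_assoc,
        CE_right hF (hF.1 _), hx j k, if_neg (Ne.symm hk), zero_mul, mul_zero]
    · simp
  rw [star_sub, star_star, sub_mul, mul_sub, mul_sub, map_sub, map_sub, map_sub, h1, h2, h3,
    sub_self, sub_zero, sub_nonneg] at h
  exact h

/-- A Pimsner-Popa type bound: if `F` has finite index, then `∑ x_j* x_j` is
bounded by a constant, uniformly over all `F`-orthonormal families. -/
theorem orth_bound [Nontrivial A] (hF : IsCondExp (B : Set A) F) {m : ℕ} {l : Fin m → A}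
    (hl : IsRightQB F l) : ∃ K : ℝ, 0 ≤ K ∧ ∀ (n : ℕ) (x : Fin n → A), Orth F x →
      ∑ j, star (x j) * x j ≤ (K : ℂ) • (1 : A) := by
  have hm : (m : ℝ) ≠ 0 := by
    intro h
    have hm0 : m = 0 := by exact_mod_cast h
    subst hm0
    have := hl 1
    simp at this
  set s : ℂ := ((Real.sqrt m : ℝ) : ℂ) with hs
  have hss : s * s = m := by
    rw [hs, ← Complex.ofReal_mul, Real.mul_self_sqrt (Nat.cast_nonneg m), Complex.ofReal_natCast]
  have hs0 : s ≠ 0 := by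
    rintro h0
    rw [h0, mul_zero] at hss
    exact hm (by exact_mod_cast hss.symm)
  have hsts : star s = s := Complex.conj_ofReal _
  set Q : A := ∑ i, l i * F (star (l i) * l i) * star (l i) with hQ
  have hQ0 : 0 ≤ Q := Finset.sum_nonneg fun i _ =>
    star_right_conjugate_nonneg (CE_nonneg hF (star_mul_self_nonneg _)) _
  have hmQ : 0 ≤ (m : ℂ) • Q := by
    have := real_smul_nonneg (Nat.cast_nonneg m) hQ0
    rwa [Complex.ofReal_natCast] at this
  refine ⟨‖(m : ℂ) • Q‖, norm_nonneg _, fun n x hx => le_trans ?_ (le_norm_smul_one hmQ)⟩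
  set T := ∑ j, star (x j) * x j with hT
  set P : A := ∑ i, l i * (∑ j, star (F (x j * l i)) * F (x j * l i)) * star (l i) with hP
  have hPQ : P ≤ Q := Finset.sum_le_sum fun i _ =>
    star_right_conjugate_le_conjugate (bessel hF hx (l i)) (l i)
  have hmPQ : (m : ℂ) • P ≤ (m : ℂ) • Q := by
    rw [← sub_nonneg, ← smul_sub]
    have := real_smul_nonneg (Nat.cast_nonneg m) (sub_nonneg.2 hPQ)
    rwa [Complex.ofReal_natCast] at this
  refine le_trans ?_ hmPQ
  have hpos : 0 ≤ ∑ i, ∑ j, star (s⁻¹ • x j - s • (F (x j * l i) * star (l i))) *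
      (s⁻¹ • x j - s • (F (x j * l i) * star (l i))) :=
    Finset.sum_nonneg fun i _ => Finset.sum_nonneg fun j _ => star_mul_self_nonneg _
  have hexp : ∀ i j, star (s⁻¹ • x j - s • (F (x j * l i) * star (l i))) *
      (s⁻¹ • x j - s • (F (x j * l i) * star (l i))) =
      (m : ℂ)⁻¹ • (star (x j) * x j) - star (x j) * (F (x j * l i) * star (l i))
        - star (F (x j * l i) * star (l i)) * x j
        + (m : ℂ) • (l i * (star (F (x j * l i)) * F (x j * l i)) * star (l i)) := by
    intro i j
    have e1 : s⁻¹ * s⁻¹ = (m : ℂ)⁻¹ := by rw [← mul_inv, hss]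
    rw [star_sub, star_smul, star_smul, star_inv₀, hsts, sub_mul, mul_sub, mul_sub,
      smul_mul_smul_comm, smul_mul_smul_comm, smul_mul_smul_comm, smul_mul_smul_comm, e1, hss,
      inv_mul_cancel₀ hs0, mul_inv_cancel₀ hs0, one_smul, one_smul]
    simp only [star_mul, star_star, mul_assoc]
    abel
  simp only [hexp, Finset.sum_add_distrib, Finset.sum_sub_distrib] at hpos
  have t1 : ∑ _i : Fin m, ∑ j, (m : ℂ)⁻¹ • (star (x j) * x j) = T := by
    rw [Finset.sum_const, Finset.card_univ, Fintype.card_fin, ← Finset.smul_sum,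
      ← Nat.cast_smul_eq_nsmul ℂ, smul_smul, mul_inv_cancel₀ (by exact_mod_cast hm), one_smul]
  have t2 : ∑ i, ∑ j, star (x j) * (F (x j * l i) * star (l i)) = T := by
    rw [Finset.sum_comm]
    refine Finset.sum_congr rfl fun j _ => ?_
    rw [← Finset.mul_sum, ← hl (x j)]
  have t3 : ∑ i, ∑ j, star (F (x j * l i) * star (l i)) * x j = T := by
    rw [Finset.sum_comm]
    refine Finset.sum_congr rfl fun j _ => ?_
    rw [← Finset.sum_mul, ← star_sum, ← hl (x j)]
  have t4 : ∑ i, ∑ j, (m : ℂ) • (l i * (star (F (x j * l i)) * F (x j * l i)) * star (l i)) =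
      (m : ℂ) • P := by
    rw [hP, Finset.smul_sum]
    refine Finset.sum_congr rfl fun i _ => ?_
    rw [← Finset.smul_sum, Finset.mul_sum, Finset.sum_mul]
  rw [t1, t2, t3, t4, sub_self, zero_sub, neg_add_eq_sub, sub_nonneg] at hpos
  exact hpos

/-- A conditional expectation with a quasi-basis is faithful: if `F (x x*) = 0` then
`F (x y) = 0` for all `y`, and the quasi-basis expansion of `x` vanishes. -/
theorem faithful_of_QB (hF : IsCondExp (B : Set A) F) {m : ℕ} {l : Fin m → A}
    (hl : IsRightQB F l) {x : A} (hx : F (x * star x) = 0) : x = 0 := by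
  -- Cauchy-Schwarz: the form vanishes against every `y`.
  have key : ∀ y, F (x * y) = 0 := by
    intro y
    set b := F (x * y) with hb
    have hbB : b ∈ B := hF.1 _
    have hsb : F (star y * star x) = star b := by rw [hb, ← CE_star hF, star_mul]
    set k : ℝ := ‖F (star y * y)‖ with hk
    have hk0 : 0 ≤ k := norm_nonneg _
    set t : ℝ := (k + 1)⁻¹ with ht
    have ht0 : 0 < t := by positivity
    have hle : b * F (star y * y) * star b ≤ b * ((k : ℂ) • (1 : A)) * star b :=
      star_right_conjugate_le_conjugate
        (le_norm_smul_one (CE_nonneg hF (star_mul_self_nonneg y))) b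
    have h := CE_nonneg hF (mul_star_self_nonneg (x - (t : ℂ) • (b * star y)))
    have hstt : star (t : ℂ) = t := Complex.conj_ofReal _
    have e1 : F (x * star ((t : ℂ) • (b * star y))) = (t : ℂ) • (b * star b) := by
      rw [star_smul, star_mul, star_star, mul_smul_comm, map_smul, ← mul_assoc,
        CE_right hF (star_mem hbB), hstt]
    have e2 : F ((t : ℂ) • (b * star y) * star x) = (t : ℂ) • (b * star b) := by
      rw [smul_mul_assoc, map_smul, mul_assoc, CE_left hF hbB, hsb]
    have e3 : F ((t : ℂ) • (b * star y) * star ((t : ℂ) • (b * star y))) =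
        ((t * t : ℝ) : ℂ) • (b * F (star y * y) * star b) := by
      rw [star_smul, star_mul, star_star, smul_mul_smul_comm, map_smul, hstt, mul_assoc b,
        CE_left hF hbB, ← mul_assoc (star y), CE_right hF (star_mem hbB), ← mul_assoc,
        Complex.ofReal_mul]
    rw [star_sub, sub_mul, mul_sub, mul_sub, map_sub, map_sub, map_sub, hx, e1, e2, e3] at h
    have h2 := real_smul_nonneg (mul_self_nonneg t) (sub_nonneg.2 hle)
    have h3 := add_nonneg h h2
    have hpos : 0 < t * (2 - t * k) := by
      have : t * k < 1 := by
        rw [ht, inv_mul_lt_iff₀ (by positivity)]; linarith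
      apply mul_pos ht0; linarith
    have h4 : 0 ≤ -(((t * (2 - t * k) : ℝ) : ℂ) • (b * star b)) := by
      refine le_of_le_of_eq h3 ?_
      rw [mul_smul_comm, mul_one, smul_mul_assoc, smul_sub, smul_smul]
      push_cast
      module
    have h5 := real_smul_nonneg hpos.le (mul_star_self_nonneg b)
    have h6 := le_antisymm (neg_nonneg.1 h4) h5
    have h7 : b * star b = 0 :=
      (smul_eq_zero.1 h6).resolve_left (by exact_mod_cast hpos.ne')
    exact (CStarRing.mul_star_self_eq_zero_iff b).1 h7
  rw [hl x]
  simp [key]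

/-- If all finite families in `P` whose members are pairwise related by the symmetric relation
`R` have bounded length, then there is a maximal such family. -/
theorem exists_maximal_family {α : Type*} (P : α → Prop) (R : α → α → Prop)
    (hR : ∀ x y, P x → P y → R x y → R y x) (K : ℕ)
    (hK : ∀ (n : ℕ) (f : Fin n → α), (∀ i, P (f i)) → (∀ i j, i ≠ j → R (f i) (f j)) → n ≤ K) :
    ∃ (n : ℕ) (f : Fin n → α), (∀ i, P (f i)) ∧ (∀ i j, i ≠ j → R (f i) (f j)) ∧
      ∀ x, P x → ∃ i, ¬ R (f i) x := by
  classical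
  let S : ℕ → Prop := fun n => ∃ f : Fin n → α, (∀ i, P (f i)) ∧ ∀ i j, i ≠ j → R (f i) (f j)
  have h0 : S 0 := ⟨Fin.elim0, fun i => i.elim0, fun i => i.elim0⟩
  obtain ⟨f, hf1, hf2⟩ := Nat.findGreatest_spec (P := S) (Nat.zero_le K) h0
  refine ⟨_, f, hf1, hf2, fun x hx => ?_⟩
  by_contra! hcon
  have hS : S (Nat.findGreatest S K + 1) := by
    refine ⟨Fin.cons x f, fun i => ?_, fun i j hij => ?_⟩
    · refine Fin.cases ?_ (fun i => ?_) i
      · simpa using hx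
      · simpa using hf1 i
    · induction i using Fin.cases with
      | zero =>
        induction j using Fin.cases with
        | zero => exact absurd rfl hij
        | succ j => simpa using hR _ _ (hf1 j) hx (hcon j)
      | succ i =>
        induction j using Fin.cases with
        | zero => simpa using hcon i
        | succ j => simpa using hf2 i j (fun h => hij (by rw [h]))
  have hle : Nat.findGreatest S K + 1 ≤ K := by
    obtain ⟨g, hg1, hg2⟩ := hS
    exact hK _ g hg1 hg2
  have := Nat.le_findGreatest hle hS
  omega

/-- An orthonormal basis `c` of the centralizer `C_A(B)` with respect to `F`. -/
def IsCentBasis (B : Set A) (F : A →ₗ[ℂ] A) {n : ℕ} (c : Fin n → A) : Prop :=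
  (∀ j, c j ∈ cent B) ∧ Orth F c ∧ ∀ x ∈ cent B, x = ∑ j, F (x * star (c j)) * c j

/-- Gram-Schmidt: a maximal orthonormal family in the centralizer is a basis. -/
theorem exists_centBasis [Nontrivial A] (hBclosed : IsClosed (B : Set A))
    (hBsimple : IsSimpleCStar (B : Set A)) (hF : IsCondExp (B : Set A) F)
    (hfaith : ∀ x ∈ cent (B : Set A), F (x * star x) = 0 → x = 0) (K : ℕ)
    (hK : ∀ (n : ℕ) (c : Fin n → A), (∀ j, c j ∈ cent (B : Set A)) → Orth F c → n ≤ K) :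
    ∃ (n : ℕ) (c : Fin n → A), IsCentBasis (B : Set A) F c := by
  obtain ⟨φ, hφ⟩ := exists_functional hBclosed hBsimple hF
  have horth : ∀ (n : ℕ) (c : Fin n → A), (∀ j, c j ∈ cent (B : Set A) ∧ F (c j * star (c j)) = 1) →
      (∀ i j, i ≠ j → F (c i * star (c j)) = 0) → Orth F c := by
    intro n c h1 h2 i j
    split_ifs with h
    · subst h; exact (h1 i).2
    · exact h2 i j h
  obtain ⟨n, c, h1, h2, h3⟩ := exists_maximal_family
    (fun x : A => x ∈ cent (B : Set A) ∧ F (x * star x) = 1) (fun x y => F (x * star y) = 0)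
    (fun x y _ _ h => by
      have := CE_star hF (x * star y)
      rw [star_mul, star_star] at this
      rw [this, h, star_zero]) K
    (fun n f hf1 hf2 => hK n f (fun j => (hf1 j).1) (horth n f hf1 hf2))
  have hc := horth n c h1 h2
  refine ⟨n, c, fun j => (h1 j).1, hc, fun x hx => ?_⟩
  by_contra hne
  set y := x - ∑ j, F (x * star (c j)) * c j with hy
  have hy0 : y ≠ 0 := sub_ne_zero.2 hne
  have hyc : y ∈ cent (B : Set A) := cent_sub hx (cent_sum _ fun j =>
    cent_mul (CE_cent hF (cent_mul hx (cent_star (h1 j).1))) (h1 j).1)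
  have hyorth : ∀ i, F (y * star (c i)) = 0 := by
    intro i
    rw [hy, sub_mul, map_sub, Finset.sum_mul, map_sum, Finset.sum_eq_single i]
    · rw [mul_assoc, CE_left hF (hF.1 _), hc i i, if_pos rfl, mul_one, sub_self]
    · intro j _ hj
      rw [mul_assoc, CE_left hF (hF.1 _), hc j i, if_neg hj, mul_zero]
    · simp
  have hyy := hφ _ (cent_mul hyc (cent_star hyc))
  obtain ⟨r, hr, hr2⟩ := nonneg_of_smul_one (hyy ▸ CE_nonneg hF (mul_star_self_nonneg y))
  rw [hr2] at hyy
  have hr0 : r ≠ 0 := by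
    rintro rfl
    rw [Complex.ofReal_zero, zero_smul] at hyy
    exact hy0 (hfaith y hyc hyy)
  set t : ℂ := (((Real.sqrt r)⁻¹ : ℝ) : ℂ) with ht
  have htt : t * t * (r : ℂ) = 1 := by
    rw [ht, ← Complex.ofReal_mul, ← Complex.ofReal_mul, ← mul_inv, Real.mul_self_sqrt hr,
      inv_mul_cancel₀ hr0, Complex.ofReal_one]
  have hst : star t = t := by rw [ht]; exact Complex.conj_ofReal _
  obtain ⟨i, hi⟩ := h3 (t • y) ⟨cent_smul t hyc, by
    rw [star_smul, smul_mul_smul_comm, map_smul, hyy, hst, smul_smul, htt, one_smul]⟩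
  apply hi
  have := CE_star hF (y * star (c i))
  rw [hyorth, star_zero, star_mul, star_star] at this
  rw [star_smul, mul_smul_comm, map_smul, this, smul_zero]

/-- Orthonormal families in the centralizer have bounded length when `F` has finite index. -/
theorem cent_orth_bound [Nontrivial A] (hBclosed : IsClosed (B : Set A))
    (hBsimple : IsSimpleCStar (B : Set A)) (hF : IsCondExp (B : Set A) F)
    {m : ℕ} {l : Fin m → A} (hl : IsRightQB F l) :
    ∃ K : ℕ, ∀ (n : ℕ) (c : Fin n → A), (∀ j, c j ∈ cent (B : Set A)) → Orth F c → n ≤ K := by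
  obtain ⟨φ, hφ⟩ := exists_functional hBclosed hBsimple hF
  obtain ⟨K, hK0, hK⟩ := orth_bound hF hl
  refine ⟨⌈K * K⌉₊, fun n c hcc hc => ?_⟩
  -- `F (c_j* c_j)` is a scalar `s_j`, bounded below because `c_j* / √s_j` is a unit vector.
  have hs : ∀ j, ∃ s : ℝ, F (star (c j) * c j) = (s : ℂ) • (1 : A) ∧ 1 ≤ s * K := by
    intro j
    have h1 := hφ _ (cent_mul (cent_star (hcc j)) (hcc j))
    obtain ⟨r, hr, hr2⟩ := nonneg_of_smul_one (h1 ▸ CE_nonneg hF (star_mul_self_nonneg (c j)))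
    rw [hr2] at h1
    refine ⟨r, h1, ?_⟩
    have hcj : F (c j * star (c j)) = 1 := by rw [hc j j, if_pos rfl]
    have hr0 : r ≠ 0 := by
      rintro rfl
      rw [Complex.ofReal_zero, zero_smul] at h1
      have : star (c j) = 0 := faithful_of_QB hF hl (by rwa [star_star])
      rw [this, mul_zero, map_zero] at hcj
      exact zero_ne_one hcj
    set t : ℂ := (((Real.sqrt r)⁻¹ : ℝ) : ℂ) with ht
    have htt : t * t * (r : ℂ) = 1 := by
      rw [ht, ← Complex.ofReal_mul, ← Complex.ofReal_mul, ← mul_inv, Real.mul_self_sqrt hr,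
        inv_mul_cancel₀ hr0, Complex.ofReal_one]
    have hst : star t = t := by rw [ht]; exact Complex.conj_ofReal _
    have h2 := hK 1 (fun _ => t • star (c j)) (fun i k => by
      rw [if_pos (Subsingleton.elim _ _), star_smul, star_star, smul_mul_smul_comm, map_smul, h1,
        hst, smul_smul, htt, one_smul])
    rw [Fin.sum_univ_one, star_smul, star_star, smul_mul_smul_comm, hst] at h2
    have h3 := CE_mono hF h2
    rw [map_smul, hcj, hF.2.1 _ (smul_one_mem _), ht, ← Complex.ofReal_mul] at h3
    have h4 := smul_one_le h3
    rw [← mul_inv, Real.mul_self_sqrt hr] at h4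
    have hrpos : 0 < r := lt_of_le_of_ne hr (Ne.symm hr0)
    rwa [inv_le_iff_one_le_mul₀' hrpos] at h4
  choose s hs1 hs2 using hs
  have h1 := CE_mono hF (hK n c hc)
  rw [map_sum, hF.2.1 _ (smul_one_mem _)] at h1
  simp only [hs1] at h1
  rw [← Finset.sum_smul, ← Complex.ofReal_sum] at h1
  have h2 := smul_one_le h1
  have h3 : (n : ℝ) ≤ (∑ j, s j) * K := by
    rw [Finset.sum_mul]
    calc (n : ℝ) = ∑ _j : Fin n, (1 : ℝ) := by simp
      _ ≤ _ := Finset.sum_le_sum fun j _ => hs2 j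
  have h4 : (n : ℝ) ≤ K * K := h3.trans (mul_le_mul_of_nonneg_right h2 hK0)
  exact_mod_cast h4.trans (Nat.le_ceil _)

/-- The Weyl group is finite: there is a finite complete set of representatives. -/
theorem exists_weyl [Nontrivial A] (hBclosed : IsClosed (B : Set A))
    (hBsimple : IsSimpleCStar (B : Set A)) (hF : IsCondExp (B : Set A) F)
    {m : ℕ} {l : Fin m → A} (hl : IsRightQB F l) :
    ∃ (n : ℕ) (u : Fin n → A), (∀ i, u i ∈ normalizer (B : Set A)) ∧
      (∀ i j, i ≠ j → star (u i) * u j ∉ UBC (B : Set A)) ∧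
      (∀ v ∈ normalizer (B : Set A), ∃ i, star (u i) * v ∈ UBC (B : Set A)) := by
  obtain ⟨K, hK0, hK⟩ := orth_bound hF hl
  obtain ⟨n, u, h1, h2, h3⟩ := exists_maximal_family
    (fun g : A => g ∈ normalizer (B : Set A)) (fun g h => star g * h ∉ UBC (B : Set A))
    (fun x y _ _ h h' => h (by simpa using UBC_star h')) ⌈K⌉₊ (fun n u hu1 hu2 => by
      have := hK n u (fun i j => by
        split_ifs with hij
        · subst hij
          rw [(normalizer_iff.1 (hu1 i)).1.2, CE_one hF]
        · rw [← one_mul (u i * star (u j))]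
          exact CE_normalizer hBclosed hBsimple hF
            (normalizer_mul (hu1 i) (normalizer_star (hu1 j))) cent_one
            (fun h => hu2 i j hij (UBC_swap (hu1 i) h)))
      have h2 : ∑ j, star (u j) * u j = ((n : ℝ) : ℂ) • (1 : A) := by
        rw [Finset.sum_congr rfl fun j _ => (normalizer_iff.1 (hu1 j)).1.1]
        simp [Nat.cast_smul_eq_nsmul]
      rw [h2] at this
      exact_mod_cast (smul_one_le this).trans (Nat.le_ceil _))
  exact ⟨n, u, h1, h2, fun v hv => by simpa using h3 v hv⟩

end Orthonormal

/-! ### Quasi-bases and the index -/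

section Index

variable [PartialOrder A] [StarOrderedRing A] {B : StarSubalgebra ℂ A} {F : A →ₗ[ℂ] A}

/-- Independence of the index element `∑ l_i l_i*` of the quasi-basis, relative to a
subset `S` of `A` containing the adjoints `l_i*` (both `A` and `C_A(B)` occur as `S`). -/
theorem index_indep (hF : IsCondExp (B : Set A) F) (S : Set A) {ι κ : Type*} [Fintype ι]
    [Fintype κ] {l : ι → A} {μ : κ → A} (hl : ∀ i, star (l i) ∈ S) (hμ : ∀ i, star (μ i) ∈ S)
    (hl2 : ∀ x ∈ S, x = ∑ i, F (x * l i) * star (l i))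
    (hμ2 : ∀ x ∈ S, x = ∑ i, F (x * μ i) * star (μ i)) :
    ∑ i, l i * star (l i) = ∑ i, μ i * star (μ i) := by
  have h1 : ∀ j, μ j = ∑ i, l i * F (star (l i) * μ j) := by
    intro j
    have := congrArg star (hl2 _ (hμ j))
    rw [star_star, star_sum] at this
    refine this.trans (Finset.sum_congr rfl fun i _ => ?_)
    rw [star_mul, star_star, ← CE_star hF, star_mul, star_star]
  calc ∑ i, l i * star (l i) = ∑ i, ∑ j, l i * F (star (l i) * μ j) * star (μ j) := by
        refine Finset.sum_congr rfl fun i _ => ?_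
        conv_lhs => rw [hμ2 _ (hl i)]
        rw [Finset.mul_sum]
        simp only [mul_assoc]
    _ = ∑ j, (∑ i, l i * F (star (l i) * μ j)) * star (μ j) := by
        rw [Finset.sum_comm]
        simp only [Finset.sum_mul]
    _ = ∑ j, μ j * star (μ j) := Finset.sum_congr rfl fun j _ => by rw [← h1 j]

/-- An orthonormal basis `c` of the centralizer and representatives `u` of the Weyl group
combine to an orthonormal basis `c_j u_w` of `A` over `B`. -/
theorem expansion [Nontrivial A] (hBclosed : IsClosed (B : Set A))
    (hBsimple : IsSimpleCStar (B : Set A)) (hreg : IsRegular (B : Set A))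
    (hF : IsCondExp (B : Set A) F) {d n : ℕ} {c : Fin d → A} {u : Fin n → A}
    (hc : IsCentBasis (B : Set A) F c) (hu : ∀ i, u i ∈ normalizer (B : Set A))
    (hu2 : ∀ i j, i ≠ j → star (u i) * u j ∉ UBC (B : Set A))
    (hu3 : ∀ v ∈ normalizer (B : Set A), ∃ i, star (u i) * v ∈ UBC (B : Set A)) (x : A) :
    x = ∑ p : Fin d × Fin n, F (x * star (c p.1 * u p.2)) * (c p.1 * u p.2) := by
  obtain ⟨hc1, hc2, hc3⟩ := hc
  have hFc := CE_continuous hF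
  let Pr : A →ₗ[ℂ] A :=
    { toFun := fun x => ∑ p : Fin d × Fin n, F (x * star (c p.1 * u p.2)) * (c p.1 * u p.2)
      map_add' := fun x y => by simp only [add_mul, map_add, Finset.sum_add_distrib]
      map_smul' := fun a x => by
        simp only [smul_mul_assoc, map_smul, Finset.smul_sum, RingHom.id_apply] }
  have hPr : Continuous Pr := by
    change Continuous fun x => ∑ p : Fin d × Fin n,
      F (x * star (c p.1 * u p.2)) * (c p.1 * u p.2)
    fun_prop
  let S : Submodule ℂ A := LinearMap.ker (Pr - LinearMap.id)
  have hmem : ∀ y, y ∈ S ↔ Pr y = y := fun y => by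
    simp [S, LinearMap.mem_ker, sub_eq_zero]
  have hSc : IsClosed (S : Set A) := by
    have : (S : Set A) = {y | Pr y = y} := Set.ext hmem
    rw [this]
    exact isClosed_eq hPr continuous_id
  have hSB : ∀ b ∈ B, ∀ y ∈ S, b * y ∈ S := by
    intro b hb y hy
    rw [hmem] at hy ⊢
    conv_rhs => rw [← hy]
    change ∑ p : Fin d × Fin n, F (b * y * star (c p.1 * u p.2)) * (c p.1 * u p.2) =
      b * ∑ p : Fin d × Fin n, F (y * star (c p.1 * u p.2)) * (c p.1 * u p.2)
    rw [Finset.mul_sum]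
    refine Finset.sum_congr rfl fun p _ => ?_
    rw [mul_assoc b, CE_left hF hb, mul_assoc]
  have hSx : ∀ j w, c j * u w ∈ S := by
    intro j w
    rw [hmem]
    change ∑ p : Fin d × Fin n, F (c j * u w * star (c p.1 * u p.2)) * (c p.1 * u p.2) = c j * u w
    rw [Finset.sum_eq_single (j, w)]
    · have : c j * u w * star (c j * u w) = c j * star (c j) := by
        rw [star_mul, mul_assoc, ← mul_assoc (u w), (normalizer_iff.1 (hu w)).1.2, one_mul]
      simp only [this, hc2 j j, if_pos, one_mul]
    · rintro ⟨i, v⟩ _ hne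
      have hz : F (c j * u w * star (c i * u v)) = 0 := by
        by_cases hwv : w = v
        · subst hwv
          have : c j * u w * star (c i * u w) = c j * star (c i) := by
            rw [star_mul, mul_assoc, ← mul_assoc (u w), (normalizer_iff.1 (hu w)).1.2, one_mul]
          have hji : j ≠ i := fun h => hne (by rw [h])
          rw [this, hc2 j i, if_neg hji]
        · have hg := normalizer_mul (hu w) (normalizer_star (hu v))
          have hgU : u w * star (u v) ∉ UBC (B : Set A) :=
            fun h => hu2 w v hwv (UBC_swap (hu w) h)
          have h1 := CE_normalizer hBclosed hBsimple hF hg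
            (cent_mul (hc1 j) (cent_conj hg (cent_star (hc1 i)))) hgU
          rw [← h1]
          congr 1
          have hgg := (normalizer_iff.1 hg).1.1
          rw [mul_assoc (c j), mul_assoc (c j), mul_assoc _ _ (u w * star (u v)), hgg, mul_one, star_mul]
          simp only [mul_assoc]
      simp only [hz, zero_mul]
    · simp
  have hfin : x ∈ S := by
    refine regular_induction hreg S hSc (fun v hv => ?_) x
    obtain ⟨w, b, z, hb, hbu, hz, hzu, hw⟩ := hu3 v hv
    obtain ⟨⟨hw1, hw2⟩, hw3, hw4⟩ := normalizer_iff.1 (hu w)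
    have hv' : v = (u w * b * star (u w)) * ((u w * z * star (u w)) * u w) := by
      calc v = u w * (star (u w) * v) := by rw [← mul_assoc, hw2, one_mul]
        _ = u w * b * ((star (u w) * u w) * z * (star (u w) * u w)) := by
            rw [hw, hw1, one_mul, mul_one, mul_assoc]
        _ = _ := by simp only [mul_assoc]
    rw [hv']
    refine hSB _ (hw3 b hb) _ ?_
    rw [hc3 _ (cent_conj (hu w) hz), Finset.sum_mul]
    refine Submodule.sum_mem _ fun j _ => ?_
    rw [mul_assoc]
    exact hSB _ (hF.1 _) _ (hSx j w)
  exact ((hmem x).1 hfin).symm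

/-- The adjoints of the orthonormal basis `c_j u_w` form a right quasi-basis, which computes the
index. -/
theorem exists_QB [Nontrivial A] (hBclosed : IsClosed (B : Set A))
    (hBsimple : IsSimpleCStar (B : Set A)) (hreg : IsRegular (B : Set A))
    (hF : IsCondExp (B : Set A) F) {d n : ℕ} {c : Fin d → A} {u : Fin n → A}
    (hc : IsCentBasis (B : Set A) F c) (hu : ∀ i, u i ∈ normalizer (B : Set A))
    (hu2 : ∀ i j, i ≠ j → star (u i) * u j ∉ UBC (B : Set A))
    (hu3 : ∀ v ∈ normalizer (B : Set A), ∃ i, star (u i) * v ∈ UBC (B : Set A)) :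
    ∃ l : Fin (d * n) → A, IsRightQB F l ∧
      ∑ i, l i * star (l i) = ∑ w, star (u w) * (∑ j, star (c j) * c j) * u w := by
  refine ⟨fun i => star (c (finProdFinEquiv.symm i).1 * u (finProdFinEquiv.symm i).2),
    fun x => ?_, ?_⟩
  · simp only [star_star]
    rw [Equiv.sum_comp finProdFinEquiv.symm (fun p : Fin d × Fin n =>
      F (x * star (c p.1 * u p.2)) * (c p.1 * u p.2))]
    exact expansion hBclosed hBsimple hreg hF hc hu hu2 hu3 x
  · simp only [star_star]
    rw [Equiv.sum_comp finProdFinEquiv.symm (fun p : Fin d × Fin n =>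
      star (c p.1 * u p.2) * (c p.1 * u p.2)), Fintype.sum_prod_type_right]
    refine Finset.sum_congr rfl fun w _ => ?_
    rw [Finset.mul_sum, Finset.sum_mul]
    refine Finset.sum_congr rfl fun j _ => ?_
    rw [star_mul]
    simp only [mul_assoc]

/-- An orthonormal family in the centralizer is linearly independent. -/
theorem orth_linearIndependent [Nontrivial A] {n : ℕ} {c : Fin n → A} (hc : Orth F c)
    (hcc : ∀ j, c j ∈ cent (B : Set A)) :
    LinearIndependent ℂ (fun j => (⟨c j, hcc j⟩ : centSubmodule (B : Set A))) := by
  rw [Fintype.linearIndependent_iff]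
  intro a ha j
  have h1 : ∑ i, a i • c i = 0 := by
    have := congrArg (Subtype.val) ha
    simpa using this
  have h2 : F ((∑ i, a i • c i) * star (c j)) = a j • (1 : A) := by
    rw [Finset.sum_mul, map_sum, Finset.sum_eq_single j]
    · rw [smul_mul_assoc, map_smul, hc j j, if_pos rfl]
    · intro i _ hij
      rw [smul_mul_assoc, map_smul, hc i j, if_neg hij, smul_zero]
    · simp
  rw [h1, zero_mul, map_zero] at h2
  exact (smul_eq_zero.1 h2.symm).resolve_right one_ne_zero

/-- The orthonormal basis `c`, as a `Module.Basis`, with its coordinate functionals. -/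
theorem exists_basis [Nontrivial A] (hBclosed : IsClosed (B : Set A))
    (hBsimple : IsSimpleCStar (B : Set A)) (hF : IsCondExp (B : Set A) F) {d : ℕ}
    {c : Fin d → A} (hc : IsCentBasis (B : Set A) F c) :
    ∃ b : Module.Basis (Fin d) ℂ (centSubmodule (B : Set A)), (∀ j, (b j : A) = c j) ∧
      ∀ (y : centSubmodule (B : Set A)) (j : Fin d),
        F ((y : A) * star (c j)) = b.repr y j • (1 : A) := by
  obtain ⟨φ, hφ⟩ := exists_functional hBclosed hBsimple hF
  have hspan : ⊤ ≤ Submodule.span ℂ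
      (Set.range fun j => (⟨c j, hc.1 j⟩ : centSubmodule (B : Set A))) := by
    rintro ⟨x, hx⟩ -
    have h1 : (⟨x, hx⟩ : centSubmodule (B : Set A)) =
        ∑ j, φ (x * star (c j)) • (⟨c j, hc.1 j⟩ : centSubmodule (B : Set A)) := by
      apply Subtype.ext
      simp only [AddSubmonoidClass.coe_finsetSum, Submodule.coe_smul]
      conv_lhs => rw [hc.2.2 x hx]
      refine Finset.sum_congr rfl fun j _ => ?_
      rw [hφ _ (cent_mul hx (cent_star (hc.1 j))), smul_mul_assoc, one_mul]
    rw [h1]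
    exact Submodule.sum_mem _ fun j _ => Submodule.smul_mem _ _ (Submodule.subset_span ⟨j, rfl⟩)
  refine ⟨Module.Basis.mk (orth_linearIndependent hc.2.1 hc.1) hspan, fun j => by simp,
    fun y j => ?_⟩
  set b := Module.Basis.mk (orth_linearIndependent hc.2.1 hc.1) hspan with hb
  have hy : (y : A) = ∑ i, b.repr y i • c i := by
    conv_lhs => rw [← b.sum_repr y]
    simp [hb]
  conv_lhs => rw [hy]
  rw [Finset.sum_mul, map_sum, Finset.sum_eq_single j]
  · rw [smul_mul_assoc, map_smul, hc.2.1 j j, if_pos rfl]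
  · intro i _ hij
    rw [smul_mul_assoc, map_smul, hc.2.1 i j, if_neg hij, smul_zero]
  · simp

end Index

/-! ### The tracial conditional expectation -/

section Trace

variable [PartialOrder A] [StarOrderedRing A] {B : StarSubalgebra ℂ A} {F : A →ₗ[ℂ] A}

/-- Right multiplication by `x ∈ C_A(B)` on `C_A(B)`. -/
noncomputable def centMulRight (x : centSubmodule (B : Set A)) :
    centSubmodule (B : Set A) →ₗ[ℂ] centSubmodule (B : Set A) :=
  (LinearMap.mulRight ℂ (x : A)).restrict fun _ hy => cent_mul hy x.2

theorem centMulRight_apply (x y : centSubmodule (B : Set A)) :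
    (centMulRight x y : A) = y * x := rfl

/-- Conjugation `y ↦ g* y g` of `C_A(B)` by a normalizing unitary `g`. -/
noncomputable def centConj (g : A) (hg : g ∈ normalizer (B : Set A)) :
    centSubmodule (B : Set A) ≃ₗ[ℂ] centSubmodule (B : Set A) where
  toFun y := ⟨star g * y * g, cent_conj' hg y.2⟩
  invFun y := ⟨g * y * star g, cent_conj hg y.2⟩
  map_add' x y := Subtype.ext (by simp [mul_add, add_mul])
  map_smul' a x := Subtype.ext (by simp)
  left_inv y := Subtype.ext (by
    change g * (star g * y * g) * star g = y
    calc g * (star g * y * g) * star g = (g * star g) * y * (g * star g) := by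
          simp only [mul_assoc]
      _ = y := by rw [(normalizer_iff.1 hg).1.2, one_mul, mul_one])
  right_inv y := Subtype.ext (by
    change star g * (g * y * star g) * g = y
    calc star g * (g * y * star g) * g = (star g * g) * y * (star g * g) := by
          simp only [mul_assoc]
      _ = y := by rw [(normalizer_iff.1 hg).1.1, one_mul, mul_one])

/-- There is a conditional expectation whose restriction to `C_A(B)` is a faithful trace invariant
under the normalizer. It is `T x = d⁻¹ ∑ F (c_j x c_j*)`, which on `C_A(B)` is the normalized
trace of right multiplication by `x`. -/
theorem exists_trace [Nontrivial A] (hBclosed : IsClosed (B : Set A))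
    (hBsimple : IsSimpleCStar (B : Set A)) (hF : IsCondExp (B : Set A) F)
    (hfaith : ∀ x ∈ cent (B : Set A), F (x * star x) = 0 → x = 0) {d : ℕ}
    {c : Fin d → A} (hc : IsCentBasis (B : Set A) F c) :
    ∃ T : A →ₗ[ℂ] A, IsCondExp (B : Set A) T ∧
      (∀ x ∈ cent (B : Set A), ∀ y ∈ cent (B : Set A), T (x * y) = T (y * x)) ∧
      (∀ g ∈ normalizer (B : Set A), ∀ x ∈ cent (B : Set A), T (star g * x * g) = T x) ∧
      (∀ x ∈ cent (B : Set A), T (x * star x) = 0 → x = 0) := by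
  obtain ⟨b, hb1, hb2⟩ := exists_basis hBclosed hBsimple hF hc
  obtain ⟨hc1, hc2, hc3⟩ := hc
  have hd : d ≠ 0 := by
    rintro rfl
    have := hc3 1 cent_one
    simp at this
  have hdC : (d : ℂ) ≠ 0 := by exact_mod_cast hd
  let T : A →ₗ[ℂ] A :=
    { toFun := fun x => (d : ℂ)⁻¹ • ∑ j, F (c j * x * star (c j))
      map_add' := fun x y => by
        simp only [mul_add, add_mul, map_add, Finset.sum_add_distrib, smul_add]
      map_smul' := fun a x => by
        simp only [mul_smul_comm, smul_mul_assoc, map_smul, ← Finset.smul_sum, RingHom.id_apply]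
        rw [smul_comm] }
  have hT : ∀ x, T x = (d : ℂ)⁻¹ • ∑ j, F (c j * x * star (c j)) := fun x => rfl
  have hbim : ∀ b₁ ∈ B, ∀ b₂ ∈ B, ∀ x, T (b₁ * x * b₂) = b₁ * T x * b₂ := by
    intro b₁ hb₁ b₂ hb₂ x
    rw [hT, hT, mul_smul_comm, smul_mul_assoc, Finset.mul_sum, Finset.sum_mul]
    congr 1
    refine Finset.sum_congr rfl fun j _ => ?_
    rw [← hF.2.2.2 b₁ hb₁ b₂ hb₂]
    congr 1
    calc c j * (b₁ * x * b₂) * star (c j) = (c j * b₁) * x * (b₂ * star (c j)) := by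
          simp only [mul_assoc]
      _ = b₁ * (c j * x * star (c j)) * b₂ := by
          rw [hc1 j b₁ hb₁, ← cent_star (hc1 j) b₂ hb₂]; simp only [mul_assoc]
  have hT1 : T 1 = 1 := by
    rw [hT]
    have : ∀ j, F (c j * 1 * star (c j)) = 1 := fun j => by rw [mul_one, hc2 j j, if_pos rfl]
    rw [Finset.sum_congr rfl fun j _ => this j, Finset.sum_const, Finset.card_univ,
      Fintype.card_fin, ← Nat.cast_smul_eq_nsmul ℂ, smul_smul, inv_mul_cancel₀ hdC, one_smul]
  have hrew : ∀ x j, c j * (x * star x) * star (c j) = (c j * x) * star (c j * x) := fun x j => by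
    rw [star_mul]; simp only [mul_assoc]
  have htr : ∀ x : centSubmodule (B : Set A),
      T x = ((d : ℂ)⁻¹ * LinearMap.trace ℂ _ (centMulRight x)) • (1 : A) := by
    intro x
    rw [hT, mul_smul, LinearMap.trace_eq_matrix_trace ℂ b, Matrix.trace, Finset.sum_smul]
    congr 1
    refine Finset.sum_congr rfl fun j _ => ?_
    rw [Matrix.diag_apply, LinearMap.toMatrix_apply, ← hb2, centMulRight_apply, hb1]
  refine ⟨T, ⟨fun x => B.smul_mem (sum_mem fun j _ => hF.1 _) _, fun y hy => ?_, fun x => ?_,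
    hbim⟩, fun x hx y hy => ?_, fun g hg x hx => ?_, fun x hx h => ?_⟩
  · have := hbim y hy 1 (one_mem B) 1
    simpa [hT1] using this
  · apply exists_star_mul_self
    rw [hT]
    have h1 : 0 ≤ ∑ j, F (c j * (star x * x) * star (c j)) := Finset.sum_nonneg fun j _ => by
      have := hrew (star x) j
      rw [star_star] at this
      rw [this]
      exact CE_nonneg hF (mul_star_self_nonneg _)
    have := real_smul_nonneg (r := (d : ℝ)⁻¹) (by positivity) h1
    simpa using this
  · have h1 : centMulRight (⟨x * y, cent_mul hx hy⟩ : centSubmodule (B : Set A)) =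
        centMulRight ⟨y, hy⟩ * centMulRight ⟨x, hx⟩ :=
      LinearMap.ext fun z => Subtype.ext (mul_assoc _ _ _).symm
    have h2 : centMulRight (⟨y * x, cent_mul hy hx⟩ : centSubmodule (B : Set A)) =
        centMulRight ⟨x, hx⟩ * centMulRight ⟨y, hy⟩ :=
      LinearMap.ext fun z => Subtype.ext (mul_assoc _ _ _).symm
    have h3 := htr ⟨x * y, cent_mul hx hy⟩
    have h4 := htr ⟨y * x, cent_mul hy hx⟩
    rw [h1, LinearMap.trace_mul_comm] at h3
    rw [h2] at h4
    exact h3.trans h4.symm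
  · have h1 : centMulRight (⟨star g * x * g, cent_conj' hg hx⟩ : centSubmodule (B : Set A)) =
        (centConj g hg).conj (centMulRight ⟨x, hx⟩) := by
      refine LinearMap.ext fun z => Subtype.ext ?_
      change (z : A) * (star g * x * g) = star g * (g * z * star g * x) * g
      calc (z : A) * (star g * x * g) = (star g * g) * z * (star g * x * g) := by
            rw [(normalizer_iff.1 hg).1.1, one_mul]
        _ = _ := by simp only [mul_assoc]
    have h3 := htr ⟨star g * x * g, cent_conj' hg hx⟩
    have h4 := htr ⟨x, hx⟩
    rw [h1, LinearMap.trace_conj'] at h3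
    exact h3.trans h4.symm
  · rw [hT, smul_eq_zero] at h
    have h1 := h.resolve_left (inv_ne_zero hdC)
    rw [Finset.sum_eq_zero_iff_of_nonneg fun j _ => by
      rw [hrew]; exact CE_nonneg hF (mul_star_self_nonneg _)] at h1
    have h2 : ∀ j, c j * x = 0 := fun j =>
      hfaith _ (cent_mul (hc1 j) hx) (by rw [← hrew]; exact h1 j (Finset.mem_univ _))
    calc x = 1 * x := (one_mul x).symm
      _ = 0 := by
        rw [hc3 1 cent_one, Finset.sum_mul]
        exact Finset.sum_eq_zero fun j _ => by rw [mul_assoc, h2, mul_zero]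

/-- For a trace `T` as in `exists_trace` with orthonormal basis `t` of `C_A(B)`, the element
`∑ t_k* t_k` does not depend on the basis, so it is fixed by the normalizer, hence central
in `A`, hence a scalar; and `T` sends it to the dimension. -/
theorem trace_index [Nontrivial A] (hBclosed : IsClosed (B : Set A))
    (hBsimple : IsSimpleCStar (B : Set A)) (hAsimple : IsSimpleCStar (Set.univ : Set A))
    (hreg : IsRegular (B : Set A)) {T : A →ₗ[ℂ] A} (hT : IsCondExp (B : Set A) T)
    (htr : ∀ x ∈ cent (B : Set A), ∀ y ∈ cent (B : Set A), T (x * y) = T (y * x))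
    (hinv : ∀ g ∈ normalizer (B : Set A), ∀ x ∈ cent (B : Set A), T (star g * x * g) = T x)
    {d : ℕ} {t : Fin d → A} (ht : IsCentBasis (B : Set A) T t) :
    ∑ k, star (t k) * t k = (d : ℂ) • (1 : A) ∧ ∑ k, t k * star (t k) = (d : ℂ) • (1 : A) := by
  obtain ⟨φ, hφ⟩ := exists_functional hBclosed hBsimple hT
  obtain ⟨ht1, ht2, ht3⟩ := ht
  set D := ∑ k, star (t k) * t k with hD
  have hinv' : ∀ g ∈ normalizer (B : Set A), ∀ x ∈ cent (B : Set A), T (g * x * star g) = T x :=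
    fun g hg x hx => by simpa using hinv _ (normalizer_star hg) x hx
  have hscal : ∀ x ∈ cent (B : Set A), ∀ z ∈ cent (B : Set A), T x * z = z * T x :=
    fun x _ z hz => (hz _ (hT.1 x)).symm
  have hD1 : ∀ x ∈ cent (B : Set A), x = ∑ k, T (x * star (t k)) * star (star (t k)) :=
    fun x hx => by simpa using ht3 x hx
  have hsymm : D = ∑ k, t k * star (t k) := by
    have := index_indep hT (cent (B : Set A)) (l := fun k => star (t k)) (μ := t)
      (fun k => by simpa using ht1 k) (fun k => cent_star (ht1 k)) hD1 (fun x hx => by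
        have h1 := congrArg star (ht3 _ (cent_star hx))
        rw [star_star, star_sum] at h1
        refine h1.trans (Finset.sum_congr rfl fun k _ => ?_)
        rw [star_mul, ← CE_star hT, star_mul, star_star, star_star, htr _ (ht1 k) _ hx,
          hscal _ (cent_mul hx (ht1 k)) _ (cent_star (ht1 k))])
    simpa using this
  have hDconj : ∀ g ∈ normalizer (B : Set A), D = star g * D * g := by
    intro g hg
    obtain ⟨⟨hg1, hg2⟩, -, -⟩ := normalizer_iff.1 hg
    have := index_indep hT (cent (B : Set A)) (l := fun k => star (t k))
      (μ := fun k => star (star g * t k * g))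
      (fun k => by simpa using ht1 k) (fun k => by simpa using cent_conj' hg (ht1 k)) hD1
      (fun x hx => by
        have h1 := ht3 _ (cent_conj hg hx)
        have h2 : x = star g * (g * x * star g) * g := by
          calc x = (star g * g) * x * (star g * g) := by rw [hg1, one_mul, mul_one]
            _ = _ := by simp only [mul_assoc]
        conv_lhs => rw [h2, h1]
        rw [Finset.mul_sum, Finset.sum_mul]
        refine Finset.sum_congr rfl fun k _ => ?_
        have h3 : T (g * x * star g * star (t k)) = T (x * star (star g * t k * g)) := by
          rw [← hinv' g hg _ (cent_mul hx (cent_star (cent_conj' hg (ht1 k))))]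
          congr 1
          simp only [star_mul, star_star, mul_assoc, hg2, mul_one]
        rw [h3, star_star, hφ _ (cent_mul hx (cent_star (cent_conj' hg (ht1 k))))]
        simp)
    simp only [star_star] at this
    refine this.trans ?_
    rw [hD, Finset.mul_sum, Finset.sum_mul]
    refine Finset.sum_congr rfl fun k _ => ?_
    calc star (star g * t k * g) * (star g * t k * g)
        = star g * star (t k) * (g * star g) * t k * g := by
          simp only [star_mul, star_star, mul_assoc]
      _ = _ := by rw [hg2, mul_one]; simp only [mul_assoc]
  have hcomm : ∀ x, D * x = x * D := by
    intro x
    let S : Submodule ℂ A := LinearMap.ker (LinearMap.mulLeft ℂ D - LinearMap.mulRight ℂ D)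
    have hmem : ∀ y, y ∈ S ↔ D * y = y * D := fun y => by
      simp [S, LinearMap.mem_ker, sub_eq_zero]
    have hSc : IsClosed (S : Set A) := by
      have : (S : Set A) = {y | D * y = y * D} := Set.ext hmem
      rw [this]
      exact isClosed_eq (by fun_prop) (by fun_prop)
    refine (hmem x).1 (regular_induction hreg S hSc (fun g hg => (hmem g).2 ?_) x)
    conv_rhs => rw [hDconj g hg]
    rw [← mul_assoc, ← mul_assoc, (normalizer_iff.1 hg).1.2, one_mul]
  obtain ⟨δ, hδ⟩ := center_scalar (⊤ : StarSubalgebra ℂ A) (by simp) (by simpa using hAsimple)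
    (z := D) (by trivial) (fun x _ => hcomm x)
  have hTD : T D = (d : ℂ) • (1 : A) := by
    rw [hsymm, map_sum, Finset.sum_congr rfl fun k _ => by rw [ht2 k k, if_pos rfl]]
    simp [Nat.cast_smul_eq_nsmul]
  have hDd : D = (d : ℂ) • (1 : A) := by
    rw [← hTD, hδ, hT.2.1 _ (smul_one_mem δ)]
  exact ⟨hDd, hsymm ▸ hDd⟩

end Trace

/-! ### Comparison of the minimal index with the index of the trace -/

section Comparison

variable [PartialOrder A] [StarOrderedRing A] {B : StarSubalgebra ℂ A} {F : A →ₗ[ℂ] A}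

theorem functional_star [Nontrivial A] (hF : IsCondExp (B : Set A) F) {φ : A →ₗ[ℂ] ℂ}
    (hφ : ∀ x ∈ cent (B : Set A), F x = φ x • (1 : A)) {x : A} (hx : x ∈ cent (B : Set A)) :
    φ (star x) = star (φ x) := by
  have h := CE_star hF x
  rw [hφ _ hx, hφ _ (cent_star hx), star_smul, star_one] at h
  exact smul_left_injective ℂ (one_ne_zero (α := A)) h

theorem centBasis_expand {φ : A →ₗ[ℂ] ℂ} (hφ : ∀ x ∈ cent (B : Set A), F x = φ x • (1 : A))
    {d : ℕ} {c : Fin d → A} (hc : IsCentBasis (B : Set A) F c) {x : A}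
    (hx : x ∈ cent (B : Set A)) : x = ∑ j, φ (x * star (c j)) • c j := by
  refine (hc.2.2 x hx).trans (Finset.sum_congr rfl fun j _ => ?_)
  rw [hφ _ (cent_mul hx (cent_star (hc.1 j))), smul_mul_assoc, one_mul]

/-- The Parseval identity for an orthonormal basis of `C_A(B)`. -/
theorem parseval [Nontrivial A] (hF : IsCondExp (B : Set A) F) {φ : A →ₗ[ℂ] ℂ}
    (hφ : ∀ x ∈ cent (B : Set A), F x = φ x • (1 : A)) {d : ℕ} {c : Fin d → A}
    (hc : IsCentBasis (B : Set A) F c) {x : A} (hx : x ∈ cent (B : Set A)) :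
    φ (x * star x) = ((∑ j, Complex.normSq (φ (x * star (c j))) : ℝ) : ℂ) := by
  conv_lhs => rw [show x * star x = (∑ j, φ (x * star (c j)) • c j) * star x by
    rw [← centBasis_expand hφ hc hx]]
  rw [Finset.sum_mul, map_sum, Complex.ofReal_sum]
  refine Finset.sum_congr rfl fun j _ => ?_
  have h := functional_star hF hφ (cent_mul hx (cent_star (hc.1 j)))
  rw [star_mul, star_star] at h
  rw [smul_mul_assoc, map_smul, h, smul_eq_mul, ← Complex.mul_conj]
  rfl

/-- Cauchy-Schwarz comparison of two orthonormal bases: if `∑ t_k t_k* = d` then the total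
`T`-length of an `F`-orthonormal basis of `C_A(B)` is at least `d`. The matrices
`L k j = ψ (t_k c_j*)` and `M j k = τ (c_j t_k*)` are inverse to each other, `L` has squared
Hilbert-Schmidt norm `d`, and `∑ |L k j - conj (M j k)|² ≥ 0`. -/
theorem length_bound [Nontrivial A] {T : A →ₗ[ℂ] A} (hF : IsCondExp (B : Set A) F)
    (hT : IsCondExp (B : Set A) T) {ψ τ : A →ₗ[ℂ] ℂ}
    (hψ : ∀ x ∈ cent (B : Set A), F x = ψ x • (1 : A))
    (hτ : ∀ x ∈ cent (B : Set A), T x = τ x • (1 : A)) {d e : ℕ} {c : Fin e → A} {t : Fin d → A}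
    (hc : IsCentBasis (B : Set A) F c) (ht : IsCentBasis (B : Set A) T t)
    (htt : ∑ k, t k * star (t k) = (d : ℂ) • (1 : A)) :
    ∃ s : ℝ, ∑ j, τ (c j * star (c j)) = (s : ℂ) ∧ (d : ℝ) ≤ s := by
  have hone : (1 : A) ≠ 0 := one_ne_zero
  refine ⟨∑ j, ∑ k, Complex.normSq (τ (c j * star (t k))), ?_, ?_⟩
  · rw [Complex.ofReal_sum]
    exact Finset.sum_congr rfl fun j _ => parseval hT hτ ht (hc.1 j)
  have hL : ∑ k, ∑ j, Complex.normSq (ψ (t k * star (c j))) = (d : ℝ) := by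
    have h1 : ψ 1 = 1 := by
      have := hψ 1 cent_one
      rw [CE_one hF] at this
      exact (smul_left_injective ℂ hone (by simpa using this)).symm
    have h2 := congrArg ψ htt
    rw [map_sum, map_smul, h1, smul_eq_mul, mul_one,
      Finset.sum_congr rfl fun k _ => parseval hF hψ hc (ht.1 k), ← Complex.ofReal_sum] at h2
    exact_mod_cast h2
  have hLM : ∀ k, ∑ j, (ψ (t k * star (c j)) * τ (c j * star (t k))).re = 1 := by
    intro k
    have h1 : τ (t k * star (t k)) = 1 := by
      have := hτ _ (cent_mul (ht.1 k) (cent_star (ht.1 k)))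
      rw [ht.2.1 k k, if_pos rfl] at this
      exact (smul_left_injective ℂ hone (by simpa using this)).symm
    rw [show t k * star (t k) = (∑ j, ψ (t k * star (c j)) • c j) * star (t k) by
      rw [← centBasis_expand hψ hc (ht.1 k)], Finset.sum_mul, map_sum] at h1
    have h2 := congrArg Complex.re h1
    rw [Complex.re_sum] at h2
    simpa only [smul_mul_assoc, map_smul, smul_eq_mul, Complex.one_re] using h2
  have hpt : ∀ k j, 2 * (ψ (t k * star (c j)) * τ (c j * star (t k))).re ≤
      Complex.normSq (ψ (t k * star (c j))) + Complex.normSq (τ (c j * star (t k))) := by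
    intro k j
    simp only [Complex.mul_re, Complex.normSq_apply]
    nlinarith [sq_nonneg ((ψ (t k * star (c j))).re - (τ (c j * star (t k))).re),
      sq_nonneg ((ψ (t k * star (c j))).im + (τ (c j * star (t k))).im)]
  have hsum := Finset.sum_le_sum fun k (_ : k ∈ Finset.univ) =>
    Finset.sum_le_sum fun j (_ : j ∈ Finset.univ) => hpt k j
  simp only [Finset.sum_add_distrib, ← Finset.mul_sum, hLM, hL] at hsum
  rw [Finset.sum_comm (f := fun k j => Complex.normSq (τ (c j * star (t k))))] at hsum
  simp at hsum
  linarith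

/-- The index formula for a minimal conditional expectation `F` and representatives `u` of the Weyl
group. Minimality against the trace gives `r₀ ≤ n d`; applying the trace to the index of `F` and
`length_bound` give `n d ≤ r₀`. -/
theorem minimal_index [Nontrivial A] (hBclosed : IsClosed (B : Set A))
    (hAsimple : IsSimpleCStar (Set.univ : Set A))
    (hBsimple : IsSimpleCStar (B : Set A)) (hreg : IsRegular (B : Set A))
    (hF : IsMinimalCondExp (B : Set A) F) {n : ℕ} {u : Fin n → A}
    (hu : ∀ i, u i ∈ normalizer (B : Set A))
    (hu2 : ∀ i j, i ≠ j → star (u i) * u j ∉ UBC (B : Set A))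
    (hu3 : ∀ v ∈ normalizer (B : Set A), ∃ i, star (u i) * v ∈ UBC (B : Set A)) :
    0 < Module.finrank ℂ (centSubmodule (B : Set A)) ∧
    ∀ (m : ℕ) (l : Fin m → A), IsRightQB F l → ∑ i, l i * star (l i) =
      ((n * Module.finrank ℂ (centSubmodule (B : Set A)) : ℕ) : ℂ) • (1 : A) := by
  obtain ⟨hF, r₀, m₀, l₀, hl₀, hr₀, hmin⟩ := hF
  have hfaith : ∀ x ∈ cent (B : Set A), F (x * star x) = 0 → x = 0 :=
    fun x _ h => faithful_of_QB hF hl₀ h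
  obtain ⟨K, hK⟩ := cent_orth_bound hBclosed hBsimple hF hl₀
  obtain ⟨e, c, hc⟩ := exists_centBasis hBclosed hBsimple hF hfaith K hK
  obtain ⟨bc, -, -⟩ := exists_basis hBclosed hBsimple hF hc
  have : Module.Finite ℂ (centSubmodule (B : Set A)) := Module.Finite.of_basis bc
  obtain ⟨T, hT, htr, hinv, hTf⟩ := exists_trace hBclosed hBsimple hF hfaith hc
  obtain ⟨d, t, ht⟩ := exists_centBasis hBclosed hBsimple hT hTf
    (Module.finrank ℂ (centSubmodule (B : Set A))) (fun k x hx hox => by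
      simpa using (orth_linearIndependent hox hx).fintype_card_le_finrank)
  obtain ⟨bt, -, -⟩ := exists_basis hBclosed hBsimple hT ht
  have hd : Module.finrank ℂ (centSubmodule (B : Set A)) = d := by
    simpa using Module.finrank_eq_card_basis bt
  have hdpos : 0 < d := by
    rcases Nat.eq_zero_or_pos d with rfl | h
    · have := ht.2.2 1 cent_one
      simp at this
    · exact h
  obtain ⟨htt, htt'⟩ := trace_index hBclosed hBsimple hAsimple hreg hT htr hinv ht
  obtain ⟨ψ, hψ⟩ := exists_functional hBclosed hBsimple hF
  obtain ⟨τ, hτ⟩ := exists_functional hBclosed hBsimple hT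
  have hone : (1 : A) ≠ 0 := one_ne_zero
  have hupper : r₀ ≤ n * d := by
    obtain ⟨l, hl, hl2⟩ := exists_QB hBclosed hBsimple hreg hT ht hu hu2 hu3
    refine hmin T hT _ l hl _ ?_
    rw [hl2, htt, Finset.sum_congr rfl fun w _ => show
      star (u w) * ((d : ℂ) • (1 : A)) * u w = (d : ℂ) • (1 : A) by
        rw [mul_smul_comm, smul_mul_assoc, mul_one, (normalizer_iff.1 (hu w)).1.1]]
    simp [mul_smul, Nat.cast_smul_eq_nsmul]
  have hlower : n * d ≤ r₀ := by
    obtain ⟨l, hl, hl2⟩ := exists_QB hBclosed hBsimple hreg hF hc hu hu2 hu3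
    obtain ⟨s, hs, hs2⟩ := length_bound hF hT hψ hτ hc ht htt'
    have h1 := index_indep hF Set.univ (l := l₀) (μ := l) (fun _ => trivial) (fun _ => trivial)
      (fun x _ => hl₀ x) (fun x _ => hl x)
    rw [hr₀, hl2] at h1
    have hX : (∑ j, star (c j) * c j) ∈ cent (B : Set A) :=
      (centSubmodule (B : Set A)).sum_mem fun j _ => cent_mul (cent_star (hc.1 j)) (hc.1 j)
    have hTX : T (∑ j, star (c j) * c j) = (s : ℂ) • (1 : A) := by
      rw [← hs, Finset.sum_smul, map_sum]
      refine Finset.sum_congr rfl fun j _ => ?_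
      rw [htr _ (cent_star (hc.1 j)) _ (hc.1 j), hτ _ (cent_mul (hc.1 j) (cent_star (hc.1 j)))]
    have h2 := congrArg T h1
    rw [hT.2.1 _ (smul_one_mem _), map_sum,
      Finset.sum_congr rfl fun w _ => (hinv _ (hu w) _ hX).trans hTX, Finset.sum_const,
      Finset.card_univ, Fintype.card_fin, ← Nat.cast_smul_eq_nsmul ℂ, smul_smul] at h2
    have h3 : r₀ = n * s := by exact_mod_cast smul_left_injective ℂ hone h2
    rw [h3]
    exact mul_le_mul_of_nonneg_left hs2 (Nat.cast_nonneg n)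
  have hr : r₀ = n * d := le_antisymm hupper hlower
  refine ⟨hd ▸ hdpos, fun m l hl => ?_⟩
  rw [index_indep hF Set.univ (l := l) (μ := l₀) (fun _ => trivial) (fun _ => trivial)
      (fun x _ => hl x) (fun x _ => hl₀ x), hr₀, hr, hd]
  push_cast
  rfl

end Comparison

/-- for a regular inclusion `B ⊂ A` of simple unital C*-algebras with a
finite-index conditional expectation and minimal conditional expectation `E₀`, the
Watatani index satisfies `[A:B]₀ = |W(B ⊂ A)| · dim_ℂ C_A(B)`: for a complete finite set
of `n = |W(B ⊂ A)|` coset representatives of the generalized Weyl group, every right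
quasi-basis `(λ_i)` of `E₀` satisfies `Σ_i λ_i λ_i* = (n · dim_ℂ C_A(B))·1`.  In
particular `[A:B]₀` is a positive integer with `|W(B ⊂ A)| ≤ [A:B]₀`, and if the
inclusion is irreducible then `[A:B]₀ = |N_A(B)/U(B)|`. -/
theorem Watatani_index_of_regular_inclusion
    (B : StarSubalgebra ℂ A) (hBclosed : IsClosed (B : Set A))
    (hAsimple : IsSimpleCStar (Set.univ : Set A))
    (hBsimple : IsSimpleCStar (B : Set A))
    (hreg : IsRegular (B : Set A))
    (E : A →ₗ[ℂ] A) (hE : IsCondExp (B : Set A) E)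
    (nE : ℕ) (lE : Fin nE → A) (hlE : IsRightQB E lE)
    (E₀ : A →ₗ[ℂ] A) (hE₀ : IsMinimalCondExp (B : Set A) E₀) :
    ∃ (n : ℕ) (u : Fin n → A),
      (∀ i, u i ∈ normalizer (B : Set A)) ∧
      (∀ i j, i ≠ j → star (u i) * u j ∉ UBC (B : Set A)) ∧
      (∀ v ∈ normalizer (B : Set A), ∃ i, star (u i) * v ∈ UBC (B : Set A)) ∧
      (∀ (m : ℕ) (l : Fin m → A), IsRightQB E₀ l →
        (∑ i, l i * star (l i)) =
          (((n * Module.finrank ℂ ↥(centSubmodule (B : Set A)) : ℕ)) : ℂ) • (1 : A)) ∧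
      0 < n * Module.finrank ℂ ↥(centSubmodule (B : Set A)) ∧
      n ≤ n * Module.finrank ℂ ↥(centSubmodule (B : Set A)) ∧
      ((∀ z ∈ cent (B : Set A), ∃ c : ℂ, z = c • (1 : A)) →
        ∃ (m : ℕ) (v : Fin m → A),
          (∀ i, v i ∈ normalizer (B : Set A)) ∧
          (∀ i j, i ≠ j → star (v i) * v j ∉ UB (B : Set A)) ∧
          (∀ w ∈ normalizer (B : Set A), ∃ i, star (v i) * w ∈ UB (B : Set A)) ∧
          (∀ (k : ℕ) (l : Fin k → A), IsRightQB E₀ l →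
            (∑ i, l i * star (l i)) = ((m : ℕ) : ℂ) • (1 : A))) := by
  -- In the zero algebra every real is an index, so none of them is minimal.
  have hnt : Nontrivial A := by
    by_contra h
    rw [not_nontrivial_iff_subsingleton] at h
    obtain ⟨h1, r₀, k, l, hl, -, hmin⟩ := hE₀
    have := hmin E₀ h1 k l hl (r₀ - 1) (Subsingleton.elim _ _)
    linarith
  let _ : CStarAlgebra A := {}
  let _ := CStarAlgebra.spectralOrder A
  let _ := CStarAlgebra.spectralOrderedRing A
  obtain ⟨n, u, hu, hu2, hu3⟩ := exists_weyl hBclosed hBsimple hE hlE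
  obtain ⟨hpos, hind⟩ := minimal_index hBclosed hAsimple hBsimple hreg hE₀ hu hu2 hu3
  have hn : 0 < n := by
    obtain ⟨i, -⟩ := hu3 1 normalizer_one
    exact i.pos
  refine ⟨n, u, hu, hu2, hu3, hind, Nat.mul_pos hn hpos, Nat.le_mul_of_pos_right n hpos, ?_⟩
  intro hirr
  have hU : UBC (B : Set A) = UB (B : Set A) := by
    ext x
    constructor
    · rintro ⟨b, c, hb, hbu, hc, hcu, rfl⟩
      obtain ⟨z, rfl⟩ := hirr c hc
      exact ⟨B.mul_mem hb (smul_one_mem z), mul_mem hbu hcu⟩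
    · rintro ⟨hx, hxu⟩
      exact ⟨x, 1, hx, hxu, cent_one, one_mem _, (mul_one x).symm⟩
  have hone : Module.finrank ℂ (centSubmodule (B : Set A)) = 1 := by
    refine finrank_eq_one (⟨1, cent_one⟩ : centSubmodule (B : Set A)) ?_ ?_
    · exact fun h => one_ne_zero (congrArg Subtype.val h)
    · rintro ⟨x, hx⟩
      obtain ⟨z, rfl⟩ := hirr x hx
      exact ⟨z, rfl⟩
  rw [hone, mul_one] at hind
  rw [hU] at hu2 hu3
  exact ⟨n, u, hu, hu2, hu3, hind⟩

end RegularInclusion
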